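/- Let n ≥ 1 and let u₀ : ℝⁿ → ℝ be bounded and continuous. Then the function u(t,x) := ∫_{ℝⁿ} K(t,x,y) u₀(y) dy is well-defined for all t > 0 and x ∈ ℝⁿ, and satisfies the heat equation ∂u/∂t (t,x) = (1/2) Σ_{i=1}^n ∂²u/∂x_i² (t,x) on (0,∞) × ℝⁿ. That is, convolving the initial distribution with the fundamental solution yields a solution of the parabolic PDE. -/

import Mathlib

open Real MeasureTheory

/-- The heat kernel on `ℝⁿ`: `K(t,x,y) = (2πt)^(−n/2) · exp(−‖x−y‖²/(2t))`. -/
noncomputable def heatKernel (n : ℕ) (t : ℝ) (x y : EuclideanSpace ℝ (Fin n)) : ℝ :=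
  (2 * Real.pi * t) ^ (-(n : ℝ) / 2) * Real.exp (-‖x - y‖ ^ 2 / (2 * t))

namespace HeatAux

lemma gauss_integrable {n : ℕ} (b : ℝ) (hb : 0 < b) (x : EuclideanSpace ℝ (Fin n)) :
    Integrable (fun y : EuclideanSpace ℝ (Fin n) => Real.exp (-‖x - y‖ ^ 2 / b)) := by
  have h := GaussianFourier.integrable_cexp_neg_mul_sq_norm_add
    (V := EuclideanSpace ℝ (Fin n)) (b := ((1 / b : ℝ) : ℂ))
    (by rw [Complex.ofReal_re]; positivity) 0 0
  have h2 := h.norm.comp_sub_left x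
  refine h2.congr (Filter.Eventually.of_forall fun y => ?_)
  simp only [Complex.norm_exp]
  congr 1
  rw [zero_mul, add_zero, ← Complex.ofReal_neg, ← Complex.ofReal_pow, ← Complex.ofReal_mul,
    Complex.ofReal_re]
  ring

lemma exp_bound (t s v w : ℝ) (ht : 0 < t) (hs : t / 2 ≤ s) (hs2 : s ≤ 2 * t) (hv : 0 ≤ v)
    (hw : 0 ≤ w) (hvw : v ≤ w + 1) :
    (1 + w ^ 2) * Real.exp (-w ^ 2 / (2 * s)) ≤
      (1 + 8 * t) * Real.exp (1 / (8 * t)) * Real.exp (-v ^ 2 / (16 * t)) := by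
  have hs0 : 0 < s := by linarith
  have h1 : -w ^ 2 / (2 * s) ≤ -w ^ 2 / (4 * t) := by
    rw [neg_div, neg_div, neg_le_neg_iff]
    exact div_le_div_of_nonneg_left (by positivity) (by positivity) (by linarith)
  have h2 : 1 + w ^ 2 ≤ (1 + 8 * t) * Real.exp (w ^ 2 / (8 * t)) := by
    have ha := Real.add_one_le_exp (w ^ 2 / (8 * t))
    have hb : 1 ≤ Real.exp (w ^ 2 / (8 * t)) := Real.one_le_exp (by positivity)
    have hc : w ^ 2 = 8 * t * (w ^ 2 / (8 * t)) := by field_simp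
    have hd : 8 * t * (w ^ 2 / (8 * t)) ≤ 8 * t * Real.exp (w ^ 2 / (8 * t)) :=
      mul_le_mul_of_nonneg_left (by linarith) (by linarith)
    linarith
  have h3 : w ^ 2 / (8 * t) + -w ^ 2 / (4 * t) ≤ 1 / (8 * t) + -v ^ 2 / (16 * t) := by
    have e1 : w ^ 2 / (8 * t) + -w ^ 2 / (4 * t) = (-2 * w ^ 2) / (16 * t) := by field_simp; ring
    have e2 : 1 / (8 * t) + -v ^ 2 / (16 * t) = (2 - v ^ 2) / (16 * t) := by field_simp; ring
    rw [e1, e2]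
    apply div_le_div_of_nonneg_right _ (by positivity)
    nlinarith [sq_nonneg (w - 1)]
  calc (1 + w ^ 2) * Real.exp (-w ^ 2 / (2 * s))
      ≤ ((1 + 8 * t) * Real.exp (w ^ 2 / (8 * t))) * Real.exp (-w ^ 2 / (4 * t)) := by
        gcongr
    _ = (1 + 8 * t) * Real.exp (w ^ 2 / (8 * t) + -w ^ 2 / (4 * t)) := by
        rw [Real.exp_add]; ring
    _ ≤ (1 + 8 * t) * Real.exp (1 / (8 * t) + -v ^ 2 / (16 * t)) := by gcongr
    _ = _ := by rw [Real.exp_add]; ring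

noncomputable def bd (n : ℕ) (t M C : ℝ) (x y : EuclideanSpace ℝ (Fin n)) : ℝ :=
  (2 * Real.pi * (t / 2)) ^ (-(n : ℝ) / 2) * M * C *
    ((1 + 8 * t) * Real.exp (1 / (8 * t))) * Real.exp (-‖x - y‖ ^ 2 / (16 * t))

lemma bd_integrable {n : ℕ} (t M C : ℝ) (ht : 0 < t) (x : EuclideanSpace ℝ (Fin n)) :
    Integrable (bd n t M C x) :=
  (gauss_integrable (16 * t) (by positivity) x).const_mul _

lemma dom {n : ℕ} (t s M C P u : ℝ) (x x' y : EuclideanSpace ℝ (Fin n)) (ht : 0 < t)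
    (hs : t / 2 ≤ s) (hs2 : s ≤ 2 * t) (hx : ‖x - x'‖ ≤ 1) (hM : 0 ≤ M)
    (hP : |P| ≤ M * (1 + ‖x' - y‖ ^ 2)) (hu : |u| ≤ C) :
    ‖heatKernel n s x' y * P * u‖ ≤ bd n t M C x y := by
  have hs0 : 0 < s := by linarith
  have hC : 0 ≤ C := (abs_nonneg _).trans hu
  have hc : (2 * Real.pi * s) ^ (-(n : ℝ) / 2) ≤ (2 * Real.pi * (t / 2)) ^ (-(n : ℝ) / 2) := by
    apply Real.rpow_le_rpow_of_nonpos (by positivity)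
    · gcongr
    · have : (0:ℝ) ≤ n := n.cast_nonneg
      linarith
  have hc0 : 0 ≤ (2 * Real.pi * s) ^ (-(n : ℝ) / 2) := by positivity
  have hv : ‖x - y‖ ≤ ‖x' - y‖ + 1 := by
    have := norm_add_le (x - x') (x' - y)
    rw [sub_add_sub_cancel] at this
    linarith
  have hb := exp_bound t s ‖x - y‖ ‖x' - y‖ ht hs hs2 (norm_nonneg _) (norm_nonneg _) hv
  rw [Real.norm_eq_abs, abs_mul, abs_mul, heatKernel, abs_mul, abs_of_nonneg hc0, Real.abs_exp, bd]
  calc (2 * Real.pi * s) ^ (-(n : ℝ) / 2) * Real.exp (-‖x' - y‖ ^ 2 / (2 * s)) * |P| * |u|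
      ≤ (2 * Real.pi * (t / 2)) ^ (-(n : ℝ) / 2) * Real.exp (-‖x' - y‖ ^ 2 / (2 * s)) *
        (M * (1 + ‖x' - y‖ ^ 2)) * C := by gcongr
    _ = (2 * Real.pi * (t / 2)) ^ (-(n : ℝ) / 2) * M * C *
        ((1 + ‖x' - y‖ ^ 2) * Real.exp (-‖x' - y‖ ^ 2 / (2 * s))) := by ring
    _ ≤ (2 * Real.pi * (t / 2)) ^ (-(n : ℝ) / 2) * M * C *
        ((1 + 8 * t) * Real.exp (1 / (8 * t)) * Real.exp (-‖x - y‖ ^ 2 / (16 * t))) := by gcongr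
    _ = _ := by ring

lemma K_cont {n : ℕ} (s : ℝ) (x : EuclideanSpace ℝ (Fin n)) :
    Continuous (fun y => heatKernel n s x y) := by
  unfold heatKernel
  fun_prop

lemma K_int {n : ℕ} (t M C : ℝ) (ht : 0 < t) (hM : 0 ≤ M) (x : EuclideanSpace ℝ (Fin n))
    (P u : EuclideanSpace ℝ (Fin n) → ℝ) (hPc : Continuous P) (huc : Continuous u)
    (hP : ∀ y, |P y| ≤ M * (1 + ‖x - y‖ ^ 2)) (hu : ∀ y, |u y| ≤ C) :
    Integrable (fun y => heatKernel n t x y * P y * u y) :=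
  (bd_integrable t M C ht x).mono'
    (((K_cont t x).mul hPc).mul huc).aestronglyMeasurable
    (Filter.Eventually.of_forall fun y =>
      dom t t M C (P y) (u y) x x y ht (by linarith) (by linarith) (by simp) hM (hP y) (hu y))

lemma K_deriv_t {n : ℕ} (s : ℝ) (hs : 0 < s) (x y : EuclideanSpace ℝ (Fin n)) :
    HasDerivAt (fun s => heatKernel n s x y)
      (heatKernel n s x y * (‖x - y‖ ^ 2 / (2 * s ^ 2) - n / (2 * s))) s := by
  unfold heatKernel
  have h0 : HasDerivAt (fun s : ℝ => 2 * Real.pi * s) (2 * Real.pi) s := by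
    simpa using (hasDerivAt_id s).const_mul (2 * Real.pi)
  have hp : (0:ℝ) < 2 * Real.pi * s := by positivity
  have h1 := h0.rpow_const (p := -(n : ℝ) / 2) (Or.inl hp.ne')
  have h2' : HasDerivAt (fun s : ℝ => 2 * s) 2 s := by
    simpa using (hasDerivAt_id s).const_mul (2 : ℝ)
  have h2 := ((hasDerivAt_const s (-‖x - y‖ ^ 2)).div h2' (by positivity)).exp
  refine (h1.mul h2).congr_deriv ?_
  simp only [Pi.div_apply]
  rw [Real.rpow_sub_one hp.ne']
  have := Real.pi_pos
  field_simp
  ring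

lemma norm_upd {n : ℕ} (x y : EuclideanSpace ℝ (Fin n)) (i : Fin n) (r : ℝ) :
    ‖(WithLp.toLp 2 (Function.update x i r) : EuclideanSpace ℝ (Fin n)) - y‖ ^ 2 =
      (‖x - y‖ ^ 2 - (x i - y i) ^ 2) + (r - y i) ^ 2 := by
  rw [EuclideanSpace.real_norm_sq_eq, EuclideanSpace.real_norm_sq_eq,
    ← Finset.add_sum_erase _ _ (Finset.mem_univ i), ← Finset.add_sum_erase _ _ (Finset.mem_univ i)]
  have : ∑ j ∈ Finset.univ.erase i,
      ((WithLp.toLp 2 (Function.update x i r) : EuclideanSpace ℝ (Fin n)) - y) j ^ 2 =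
      ∑ j ∈ Finset.univ.erase i, (x - y) j ^ 2 := by
    refine Finset.sum_congr rfl fun j hj => ?_
    simp [Function.update_of_ne (Finset.ne_of_mem_erase hj)]
  rw [this]
  simp
  ring

lemma coord_le {n : ℕ} (x y : EuclideanSpace ℝ (Fin n)) (i : Fin n) (r : ℝ) :
    (r - y i) ^ 2 ≤
      ‖(WithLp.toLp 2 (Function.update x i r) : EuclideanSpace ℝ (Fin n)) - y‖ ^ 2 := by
  have h := EuclideanSpace.real_norm_sq_eq
    ((WithLp.toLp 2 (Function.update x i r) : EuclideanSpace ℝ (Fin n)) - y)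
  have h2 := Finset.single_le_sum (f := fun j =>
    ((WithLp.toLp 2 (Function.update x i r) : EuclideanSpace ℝ (Fin n)) - y) j ^ 2)
    (fun j _ => sq_nonneg _) (Finset.mem_univ i)
  rw [h]
  simpa using h2

lemma upd_dist {n : ℕ} (x : EuclideanSpace ℝ (Fin n)) (i : Fin n) (r r' : ℝ) (h : |r - r'| ≤ 1) :
    ‖(WithLp.toLp 2 (Function.update x i r') : EuclideanSpace ℝ (Fin n)) -
      WithLp.toLp 2 (Function.update x i r)‖ ≤ 1 := by
  have h1 := norm_upd x (WithLp.toLp 2 (Function.update x i r)) i r'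
  have h2 := norm_upd x (WithLp.toLp 2 (Function.update x i r)) i r
  have h3 : (r' - r) ^ 2 ≤ 1 := by
    rw [sq_le_one_iff_abs_le_one, abs_sub_comm]; exact h
  simp only [sub_self, norm_zero, Function.update_self] at h1 h2
  have h4 : ‖(WithLp.toLp 2 (Function.update x i r') : EuclideanSpace ℝ (Fin n)) -
      WithLp.toLp 2 (Function.update x i r)‖ ^ 2 ≤ 1 := by
    rw [h1]; linarith
  exact (sq_le_one_iff₀ (norm_nonneg _)).1 h4

lemma K_deriv_x {n : ℕ} (t : ℝ) (ht : 0 < t) (x y : EuclideanSpace ℝ (Fin n)) (i : Fin n) (r : ℝ) :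
    HasDerivAt (fun r => heatKernel n t (WithLp.toLp 2 (Function.update x i r)) y)
      (heatKernel n t (WithLp.toLp 2 (Function.update x i r)) y * (-(r - y i) / t)) r := by
  unfold heatKernel
  simp only [norm_upd]
  have h0 : HasDerivAt (fun r : ℝ => -((‖x - y‖ ^ 2 - (x i - y i) ^ 2) + (r - y i) ^ 2) / (2 * t))
      (-(r - y i) / t) r := by
    have h1 : HasDerivAt (fun r : ℝ => (r - y i) ^ 2) (2 * (r - y i)) r := by
      exact (((hasDerivAt_id r).sub_const (y i)).pow 2).congr_deriv (by simp)
    refine ((h1.const_add _).neg.div_const (2 * t)).congr_deriv ?_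
    field_simp
  refine (h0.exp.const_mul _).congr_deriv ?_
  ring

lemma K_deriv_xx {n : ℕ} (t : ℝ) (ht : 0 < t) (x y : EuclideanSpace ℝ (Fin n)) (i : Fin n)
    (r : ℝ) :
    HasDerivAt (fun r => heatKernel n t (WithLp.toLp 2 (Function.update x i r)) y
        * (-(r - y i) / t))
      (heatKernel n t (WithLp.toLp 2 (Function.update x i r)) y *
        ((r - y i) ^ 2 / t ^ 2 - 1 / t)) r := by
  have h1 : HasDerivAt (fun r : ℝ => -(r - y i) / t) (-1 / t) r := by
    simpa using ((hasDerivAt_id r).sub_const (y i)).neg.div_const t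
  refine ((K_deriv_x t ht x y i r).mul h1).congr_deriv ?_
  field_simp
  ring

lemma P1_bound {t a w : ℝ} (ht : 0 < t) (h : a ^ 2 ≤ w) : |-a / t| ≤ 1 / t * (1 + w) := by
  rw [abs_div, abs_neg, abs_of_pos ht, div_mul_eq_mul_div, one_mul]
  apply div_le_div_of_nonneg_right _ ht.le
  rw [← sq_abs] at h
  nlinarith [sq_nonneg (|a| - 1)]

lemma P2_bound {t a w : ℝ} (ht : 0 < t) (h : a ^ 2 ≤ w) :
    |a ^ 2 / t ^ 2 - 1 / t| ≤ (1 / t ^ 2 + 1 / t) * (1 + w) := by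
  have hw : 0 ≤ w := (sq_nonneg a).trans h
  have h1 : a ^ 2 / t ^ 2 ≤ 1 / t ^ 2 * w := by
    rw [div_mul_eq_mul_div, one_mul]; gcongr
  have h2 : 0 ≤ a ^ 2 / t ^ 2 := by positivity
  have h3 : 0 ≤ 1 / t ^ 2 := by positivity
  have h4 : 0 < 1 / t := by positivity
  have h5 : 0 ≤ 1 / t * w := by positivity
  rw [abs_le]
  constructor <;> nlinarith

lemma Pt_bound {n : ℕ} {t s w : ℝ} (ht : 0 < t) (hs : t / 2 ≤ s) (hw : 0 ≤ w) :
    |w / (2 * s ^ 2) - n / (2 * s)| ≤ (2 / t ^ 2 + n / t) * (1 + w) := by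
  have hs0 : 0 < s := by linarith
  have h1 : w / (2 * s ^ 2) ≤ 2 / t ^ 2 * w := by
    rw [div_mul_eq_mul_div, div_le_div_iff₀ (by positivity) (by positivity)]
    have : t ^ 2 ≤ 4 * s ^ 2 := by nlinarith
    nlinarith
  have h2 : (n : ℝ) / (2 * s) ≤ n / t :=
    div_le_div_of_nonneg_left (by positivity) ht (by linarith)
  have h3 : 0 ≤ w / (2 * s ^ 2) := by positivity
  have h4 : 0 ≤ (n : ℝ) / (2 * s) := by positivity
  have h5 : 0 ≤ 2 / t ^ 2 := by positivity
  have h6 : 0 ≤ (n : ℝ) / t * w := by positivity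
  rw [abs_le]
  constructor <;> nlinarith

section
variable {n : ℕ} (u : EuclideanSpace ℝ (Fin n) → ℝ) (hu : Continuous u) (C : ℝ)
  (hC : ∀ y, |u y| ≤ C)

lemma int0 (hu : Continuous u) (hC : ∀ y, |u y| ≤ C) (t : ℝ) (ht : 0 < t)
    (x : EuclideanSpace ℝ (Fin n)) :
    Integrable (fun y => heatKernel n t x y * u y) := by
  have := K_int t 1 C ht zero_le_one x (fun _ => 1) u continuous_const hu
    (fun y => by simp) hC
  simpa using this

lemma deriv_t (hu : Continuous u) (hC : ∀ y, |u y| ≤ C) (t : ℝ) (ht : 0 < t)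
    (x : EuclideanSpace ℝ (Fin n)) :
    HasDerivAt (fun s => ∫ y, heatKernel n s x y * u y)
      (∫ y, heatKernel n t x y * (‖x - y‖ ^ 2 / (2 * t ^ 2) - n / (2 * t)) * u y) t := by
  refine (hasDerivAt_integral_of_dominated_loc_of_deriv_le
    (F := fun s y => heatKernel n s x y * u y)
    (F' := fun s y => heatKernel n s x y * (‖x - y‖ ^ 2 / (2 * s ^ 2) - n / (2 * s)) * u y)
    (s := Set.Icc (t / 2) (2 * t)) (bound := bd n t (2 / t ^ 2 + n / t) C x)
    (Icc_mem_nhds (by linarith) (by linarith)) ?_ (int0 u C hu hC t ht x) ?_ ?_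
    (bd_integrable _ _ _ ht x) ?_).2
  · exact Filter.Eventually.of_forall fun s => ((K_cont s x).mul hu).aestronglyMeasurable
  · exact (((K_cont t x).mul (by fun_prop)).mul hu).aestronglyMeasurable
  · refine Filter.Eventually.of_forall fun y s hs => ?_
    exact dom t s _ C _ (u y) x x y ht hs.1 hs.2 (by simp) (by positivity)
      (Pt_bound ht hs.1 (by positivity)) (hC y)
  · refine Filter.Eventually.of_forall fun y s hs => ?_
    exact (K_deriv_t s (by linarith [hs.1]) x y).mul_const (u y)

lemma deriv_x (hu : Continuous u) (hC : ∀ y, |u y| ≤ C) (t : ℝ) (ht : 0 < t)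
    (x : EuclideanSpace ℝ (Fin n)) (i : Fin n) (r : ℝ) :
    HasDerivAt (fun r => ∫ y, heatKernel n t (WithLp.toLp 2 (Function.update x i r)) y * u y)
      (∫ y, heatKernel n t (WithLp.toLp 2 (Function.update x i r)) y * (-(r - y i) / t) * u y)
      r := by
  refine (hasDerivAt_integral_of_dominated_loc_of_deriv_le
    (F := fun r y => heatKernel n t (WithLp.toLp 2 (Function.update x i r)) y * u y)
    (F' := fun r y => heatKernel n t (WithLp.toLp 2 (Function.update x i r)) y *
      (-(r - y i) / t) * u y)
    (s := Metric.closedBall r 1) (bound := bd n t (1 / t) C (WithLp.toLp 2 (Function.update x i r)))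
    (Metric.closedBall_mem_nhds r one_pos) ?_ (int0 u C hu hC t ht _) ?_ ?_
    (bd_integrable _ _ _ ht _) ?_).2
  · exact Filter.Eventually.of_forall fun s => ((K_cont t _).mul hu).aestronglyMeasurable
  · exact (((K_cont t _).mul (by fun_prop)).mul hu).aestronglyMeasurable
  · refine Filter.Eventually.of_forall fun y s hs => ?_
    exact dom t t _ C _ (u y) _ _ y ht (by linarith) (by linarith)
      (upd_dist x i s r hs) (by positivity)
      (P1_bound ht (coord_le x y i s)) (hC y)
  · refine Filter.Eventually.of_forall fun y s hs => ?_
    exact (K_deriv_x t ht x y i s).mul_const (u y)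

lemma deriv_xx (hu : Continuous u) (hC : ∀ y, |u y| ≤ C) (t : ℝ) (ht : 0 < t)
    (x : EuclideanSpace ℝ (Fin n)) (i : Fin n) (r : ℝ) :
    Integrable (fun y => heatKernel n t (WithLp.toLp 2 (Function.update x i r)) y *
      ((r - y i) ^ 2 / t ^ 2 - 1 / t) * u y) ∧
    HasDerivAt (fun r => ∫ y, heatKernel n t (WithLp.toLp 2 (Function.update x i r)) y *
        (-(r - y i) / t) * u y)
      (∫ y, heatKernel n t (WithLp.toLp 2 (Function.update x i r)) y *
        ((r - y i) ^ 2 / t ^ 2 - 1 / t) * u y) r := by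
  refine (hasDerivAt_integral_of_dominated_loc_of_deriv_le
    (F := fun r y => heatKernel n t (WithLp.toLp 2 (Function.update x i r)) y *
      (-(r - y i) / t) * u y)
    (F' := fun r y => heatKernel n t (WithLp.toLp 2 (Function.update x i r)) y *
      ((r - y i) ^ 2 / t ^ 2 - 1 / t) * u y)
    (s := Metric.closedBall r 1)
    (bound := bd n t (1 / t ^ 2 + 1 / t) C (WithLp.toLp 2 (Function.update x i r)))
    (Metric.closedBall_mem_nhds r one_pos) ?_ ?_ ?_ ?_
    (bd_integrable _ _ _ ht _) ?_)
  · exact Filter.Eventually.of_forall fun s =>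
      (((K_cont t _).mul (by fun_prop)).mul hu).aestronglyMeasurable
  · exact K_int t (1 / t) C ht (by positivity) _ _ u (by fun_prop) hu
      (fun y => P1_bound ht (coord_le x y i r)) hC
  · exact (((K_cont t _).mul (by fun_prop)).mul hu).aestronglyMeasurable
  · refine Filter.Eventually.of_forall fun y s hs => ?_
    exact dom t t _ C _ (u y) _ _ y ht (by linarith) (by linarith)
      (upd_dist x i s r hs) (by positivity)
      (P2_bound ht (coord_le x y i s)) (hC y)
  · refine Filter.Eventually.of_forall fun y s hs => ?_
    exact (K_deriv_xx t ht x y i s).mul_const (u y)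

end

end HeatAux

/-- For bounded continuous initial data `u₀`, the convolution
`u(t,x) := ∫ K(t,x,y) u₀(y) dy` is well-defined for all `t > 0` (the integrand is
integrable) and satisfies the heat equation `∂u/∂t = (1/2) Σᵢ ∂²u/∂xᵢ²` on `(0,∞) × ℝⁿ`. -/
theorem convolution_with_heatKernel_solves_heat_equation (n : ℕ) (hn : 1 ≤ n)
    (u₀ : EuclideanSpace ℝ (Fin n) → ℝ) (hcont : Continuous u₀)
    (hbdd : ∃ C : ℝ, ∀ y, |u₀ y| ≤ C) :
    (∀ t > (0 : ℝ), ∀ x : EuclideanSpace ℝ (Fin n),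
        Integrable (fun y => heatKernel n t x y * u₀ y)) ∧
      ∀ t > (0 : ℝ), ∀ x : EuclideanSpace ℝ (Fin n),
        deriv (fun s => ∫ y, heatKernel n s x y * u₀ y) t =
          (1 / 2) * ∑ i : Fin n,
            iteratedDeriv 2
              (fun r => ∫ y, heatKernel n t (WithLp.toLp 2 (Function.update x i r)) y * u₀ y) (x i) := by
  obtain ⟨C, hC⟩ := hbdd
  refine ⟨fun t ht x => HeatAux.int0 u₀ C hcont hC t ht x, fun t ht x => ?_⟩
  rw [(HeatAux.deriv_t u₀ C hcont hC t ht x).deriv]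
  have hx : ∀ i : Fin n, (WithLp.toLp 2 (Function.update x i (x i)) : EuclideanSpace ℝ (Fin n)) = x := by
    intro i
    rw [Function.update_eq_self]
  have h2 : ∀ i : Fin n, iteratedDeriv 2
      (fun r => ∫ y, heatKernel n t (WithLp.toLp 2 (Function.update x i r)) y * u₀ y) (x i) =
      ∫ y, heatKernel n t x y * ((x i - y i) ^ 2 / t ^ 2 - 1 / t) * u₀ y := by
    intro i
    rw [iteratedDeriv_succ, iteratedDeriv_one,
      funext fun r => (HeatAux.deriv_x u₀ C hcont hC t ht x i r).deriv,
      (HeatAux.deriv_xx u₀ C hcont hC t ht x i (x i)).2.deriv, hx]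
  have hi : ∀ i ∈ Finset.univ, Integrable (fun y : EuclideanSpace ℝ (Fin n) =>
      heatKernel n t x y * ((x i - y i) ^ 2 / t ^ 2 - 1 / t) * u₀ y) := by
    intro i _
    have := (HeatAux.deriv_xx u₀ C hcont hC t ht x i (x i)).1
    rwa [hx] at this
  rw [Finset.sum_congr rfl fun i _ => h2 i, ← integral_finsetSum _ hi, ← integral_const_mul]
  congr 1
  funext y
  rw [← Finset.sum_mul, ← Finset.mul_sum, Finset.sum_sub_distrib, ← Finset.sum_div,
    EuclideanSpace.real_norm_sq_eq]
  simp only [PiLp.sub_apply, Finset.sum_const, Finset.card_univ, Fintype.card_fin, nsmul_eq_mul]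
  field_simp
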